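/- arXiv:2507.18279 — 2 statements merged into one kernel-verified Lean document; each statement's English description precedes it below -/
import Mathlib

section
/- Let a ∈ ℤ and set a* = |a|+1 if |a| ≤ 1 and a* = |a| if |a| ≥ 2. Then for all v ∈ Ḣ^{a*}_⋄ and w ∈ Ḣ^{a+1}_⋄ one has |⟨B[v,w], w⟩_{Ḣ^a}| + |⟨B[w,v], w⟩_{Ḣ^a}| ≲ ‖v‖_{Ḣ^{a*}} ‖w‖_{Ḣ^a} ‖w‖_{Ḣ^{a+1}}. -/
open MeasureTheory Set
open scoped BigOperators

noncomputable section

namespace NS2D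

/-- Nonzero Fourier frequencies of the 2D torus `Ω = 𝕋²`. -/
def Freq : Type := {k : ℤ × ℤ // k ≠ 0}

/-- Squared Euclidean modulus `|k|²` of a frequency. -/
def knormSq (k : Freq) : ℝ := (k.1.1 : ℝ) ^ 2 + (k.1.2 : ℝ) ^ 2

/-- Eigenvalue `λ_k = 4π²|k|²` of the periodic Laplacian `−Δ`. -/
def lam (k : Freq) : ℝ := 4 * Real.pi ^ 2 * knormSq k

/-- A divergence-free mean-zero vector field `u ∈ Ḣ_⋄` (or, more generally, an
element of the scale `Ḣ^α_⋄`) on the torus is represented by its Fourier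
coefficients `c k` along the orthonormal basis
`e_k(x) = |k|⁻¹ (k₂, −k₁) exp(2πi k·x)` of divergence-free fields. -/
abbrev Coef : Type := Freq → ℂ

/-- Negation of a frequency. -/
def fneg (k : Freq) : Freq := ⟨-k.1, neg_ne_zero.mpr k.2⟩

/-- The conjugacy condition expressing that the coefficients `c` represent a
real-valued vector field (note `e_{−k} = − conj e_k`). -/
def IsReal (c : Coef) : Prop := ∀ k, c (fneg k) = - (starRingEnd ℂ) (c k)

/-- Squared homogeneous Sobolev norm `‖·‖²_{Ḣ^α} = Σ_k λ_k^α |c k|²`. -/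
def hSq (α : ℝ) (c : Coef) : ℝ := ∑' k, lam k ^ α * ‖c k‖ ^ 2

/-- Homogeneous Sobolev norm `‖·‖_{Ḣ^α}`. -/
def hN (α : ℝ) (c : Coef) : ℝ := Real.sqrt (hSq α c)

/-- Finiteness of the `Ḣ^α`-norm. -/
def FinH (α : ℝ) (c : Coef) : Prop := Summable fun k => lam k ^ α * ‖c k‖ ^ 2

/-- Membership in `Ḣ^α_⋄` (real-valued field with finite `Ḣ^α`-norm). -/
def MemH (α : ℝ) (c : Coef) : Prop := IsReal c ∧ FinH α c

/-- Membership in `Ḣ^∞_⋄ = C^∞(Ω)² ∩ Ḣ_⋄`: all Sobolev norms are finite. -/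
def MemHinf (c : Coef) : Prop := ∀ α : ℝ, MemH α c

/-- Real `Ḣ^α` inner product `⟨·,·⟩_{Ḣ^α}` (for real-valued fields). -/
def hInner (α : ℝ) (c d : Coef) : ℝ := ∑' k, lam k ^ α * (c k * (starRingEnd ℂ) (d k)).re

/-- The `L²` inner product. -/
def innerC (c d : Coef) : ℂ := ∑' k, c k * (starRingEnd ℂ) (d k)

/-- The unit vector `(k₂, −k₁)/|k|` spanning the divergence-free direction at
frequency `k`. -/
def evec (k : Freq) : ℝ × ℝ :=
  ((k.1.2 : ℝ) / Real.sqrt (knormSq k), -((k.1.1 : ℝ)) / Real.sqrt (knormSq k))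

/-- Euclidean dot product on `ℝ²`. -/
def dotR (a b : ℝ × ℝ) : ℝ := a.1 * b.1 + a.2 * b.2

/-- A frequency as a real vector. -/
def fvec (k : Freq) : ℝ × ℝ := ((k.1.1 : ℝ), (k.1.2 : ℝ))

/-- Fourier coefficients (along the basis `e_k`) of the Leray-projected
transport nonlinearity `B[u,v] = P[(u·∇)v]`:
`(B[u,v])^(k) · ē_k = 2πi Σ_{m+n=k, n≠0} c_m d_n (e_m·n)(e_n·e_k)`. -/
def Bc (c d : Coef) : Coef := fun k =>
  (((2 * Real.pi : ℝ) : ℂ) * Complex.I) *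
    ∑' m : Freq,
      if h : k.1 - m.1 ≠ 0 then
        c m * d ⟨k.1 - m.1, h⟩ *
          (((dotR (evec m) (fvec ⟨k.1 - m.1, h⟩) *
            dotR (evec ⟨k.1 - m.1, h⟩) (evec k) : ℝ)) : ℂ)
      else 0

/-- The Laplacian `Δ` acting on the scale: `(Δu)^(k) = −λ_k û(k)`. -/
def lapC (c : Coef) : Coef := fun k => -((lam k : ℝ) : ℂ) * c k

/-- Continuity of a trajectory `t ↦ u(t)`, `t ∈ [0,T]`, for the `Ḣ^α`-norm:
`u ∈ C([0,T], Ḣ^α_⋄)`. -/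
def ContH (α : ℝ) (T : ℝ) (u : ℝ → Coef) : Prop :=
  ∀ t ∈ Icc (0:ℝ) T, ∀ ε > 0, ∃ δ > 0, ∀ s ∈ Icc (0:ℝ) T,
    |s - t| < δ → hN α (u s - u t) < ε

/-- Membership `u ∈ L²([0,T], Ḣ^α_⋄)`. -/
def MemL2H (α : ℝ) (T : ℝ) (u : ℝ → Coef) : Prop :=
  (∀ t ∈ Ioc (0:ℝ) T, MemH α (u t)) ∧
    IntegrableOn (fun t => hSq α (u t)) (Ioc 0 T)

/-- `u` is a strong solution on `[0,T]` of the (Leray-projected) periodic 2D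
Navier–Stokes equations `du/dt + νAu + B[u,u] = f`, `u(0) = θ`, posed in `Ḣ_⋄`:
the Fourier coefficients satisfy the corresponding system of ODEs on `(0,T]`,
the trajectory is continuous into `Ḣ¹_⋄` (in particular at `t = 0`), and lies
in `L²([0,T], Ḣ²_⋄)`. -/
structure IsNSSol (ν : ℝ) (f : Coef) (T : ℝ) (θ : Coef) (u : ℝ → Coef) : Prop where
  init : u 0 = θ
  real : ∀ t ∈ Icc (0:ℝ) T, IsReal (u t)
  deriv : ∀ (k : Freq), ∀ t ∈ Ioc (0:ℝ) T,
    HasDerivAt (fun s => u s k)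
      (f k - ((ν * lam k : ℝ) : ℂ) * u t k - Bc (u t) (u t) k) t
  contH1 : ContH 1 T u
  memL2H2 : MemL2H 2 T u

/-- `U` solves the linear parabolic equation
`dU/dt − νΔU + B[u₀, U] + B[U, u₁] = g`, `U(0) = ξ`, on `[0,T]`. -/
structure IsLinPSol (ν : ℝ) (u₀ u₁ : ℝ → Coef) (g : ℝ → Coef) (T : ℝ) (ξ : Coef)
    (U : ℝ → Coef) : Prop where
  init : U 0 = ξ
  real : ∀ t ∈ Icc (0:ℝ) T, IsReal (U t)
  deriv : ∀ (k : Freq), ∀ t ∈ Ioc (0:ℝ) T,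
    HasDerivAt (fun s => U s k)
      (g t k - ((ν * lam k : ℝ) : ℂ) * U t k - Bc (u₀ t) (U t) k - Bc (U t) (u₁ t) k) t

/-- `U = 𝕀_θ[ξ]` solves the linearisation of Navier–Stokes along the
trajectory `u₀`: `dU/dt − νΔU + B[u₀,U] + B[U,u₀] = 0`, `U(0) = ξ`. -/
def IsLinSol (ν : ℝ) (u₀ : ℝ → Coef) (T : ℝ) (ξ : Coef) (U : ℝ → Coef) : Prop :=
  IsLinPSol ν u₀ u₀ (fun _ => 0) T ξ U

/-- The heat semigroup `S_t = e^{νtΔ}` on the scale `Ḣ^α_⋄`. -/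
def heatS (ν t : ℝ) (c : Coef) : Coef := fun k =>
  ((Real.exp (-(ν * lam k * t)) : ℝ) : ℂ) * c k

/-- Duhamel representation of the solution of the periodic heat equation
`du/dt − νΔu = g`, `u(0) = h`. -/
def heatSol (ν : ℝ) (g : ℝ → Coef) (h : Coef) : ℝ → Coef := fun t k =>
  ((Real.exp (-(ν * lam k * t)) : ℝ) : ℂ) *
    (h k + ∫ s in (0:ℝ)..t, ((Real.exp (ν * lam k * s) : ℝ) : ℂ) * g s k)

/-- Real-linearity of a map on the coefficient space. -/
def IsLinMap (Λ : Coef → Coef) : Prop :=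
  (∀ c d, Λ (c + d) = Λ c + Λ d) ∧ ∀ (r : ℝ) (c : Coef), Λ (r • c) = r • Λ c

/-- `Λ` defines a compact (linear) operator `Ḣ^α_⋄ → Ḣ^β_⋄`: it is linear,
maps `Ḣ^α_⋄` into `Ḣ^β_⋄`, and the image of the `Ḣ^α`-unit ball is totally
bounded for the `Ḣ^β`-norm. -/
def IsCompactOp (α β : ℝ) (Λ : Coef → Coef) : Prop :=
  IsLinMap Λ ∧ (∀ c, MemH α c → MemH β (Λ c)) ∧
    ∀ ε > 0, ∃ S : Finset Coef, ∀ c, MemH α c → hN α c ≤ 1 →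
      ∃ s ∈ S, hN β (Λ c - s) < ε

/-- The index `a* = |a|+1` if `|a| ≤ 1`, `a* = |a|` if `|a| ≥ 2`. -/
def astar (a : ℤ) : ℤ := if |a| ≤ 1 then |a| + 1 else |a|

/-- `i`-th component of the unit vector `evec k`. -/
def evecC (i : Fin 2) (k : Freq) : ℝ := if i = 0 then (evec k).1 else (evec k).2

/-- Fourier coefficients (over all of `ℤ²`) of the scalar component `u_i` of a
divergence-free field with coefficients `c`. -/
def compCoef (i : Fin 2) (c : Coef) : ℤ × ℤ → ℂ := fun n =>
  if h : n ≠ 0 then c ⟨n, h⟩ * ((evecC i ⟨n, h⟩ : ℝ) : ℂ) else 0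

/-- Convolution: Fourier coefficients of a pointwise product of two scalar
functions. -/
def convC (F G : ℤ × ℤ → ℂ) : ℤ × ℤ → ℂ := fun n => ∑' m : ℤ × ℤ, F m * G (n - m)

/-- Squared homogeneous Sobolev norm of a scalar function given by its Fourier
coefficients over `ℤ²`. -/
def hSqScalar (α : ℝ) (F : ℤ × ℤ → ℂ) : ℝ := ∑' k : Freq, lam k ^ α * ‖F k.1‖ ^ 2

/-- `‖u vᵀ‖²_{Ḣ^α} = Σ_{i,j=1}^2 ‖u_i v_j‖²_{Ḣ^α}`. -/
def hSqMat (α : ℝ) (c d : Coef) : ℝ :=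
  ∑ i : Fin 2, ∑ j : Fin 2, hSqScalar α (convC (compCoef i c) (compCoef j d))

/-- The character `exp(2πi k·x)`. -/
def efun (k : Freq) (x : ℝ × ℝ) : ℂ :=
  Complex.exp ((((2 * Real.pi : ℝ)) : ℂ) * Complex.I *
    ((k.1.1 : ℂ) * (x.1 : ℂ) + (k.1.2 : ℂ) * (x.2 : ℂ)))

/-- Pointwise evaluation of the `i`-th component of the field. -/
def evalComp (i : Fin 2) (c : Coef) (x : ℝ × ℝ) : ℂ :=
  ∑' k, c k * ((evecC i k : ℝ) : ℂ) * efun k x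

/-- Supremum norm (`C⁰`-norm) of the field. -/
def c0N (c : Coef) : ℝ := ⨆ x : ℝ × ℝ, max ‖evalComp 0 c x‖ ‖evalComp 1 c x‖

/-- The partial derivative `∂_j` acting on divergence-free fields. -/
def pderiv (j : Fin 2) (c : Coef) : Coef := fun k =>
  (((2 * Real.pi : ℝ) : ℂ) * Complex.I) *
    (if j = 0 then ((k.1.1 : ℤ) : ℂ) else ((k.1.2 : ℤ) : ℂ)) * c k

/-- `C¹`-norm of the field. -/
def c1N (c : Coef) : ℝ := c0N c + c0N (pderiv 0 c) + c0N (pderiv 1 c)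

/-- Norm of the multiplier space `B^ℓ`: `C^ℓ(Ω)²` for `ℓ ≤ 1` and `Ḣ^ℓ` for
`ℓ ≥ 2`. -/
def bN (ℓ : ℕ) (c : Coef) : ℝ :=
  if ℓ = 0 then c0N c else if ℓ = 1 then c1N c else hN (ℓ : ℝ) c

end NS2D

namespace NS2D

/-!
Expanding both factors in Fourier modes turns `⟨B[c, d], e⟩` into a sum over triads `m + n = k`.
Since `e_m ⊥ m`, the transport symbol `2π e_m · n = 2π e_m · k` is bounded both by `2π|n|` and by
`2π|k|`.

Bounding it by `2π|k|` puts the derivative on the test function. On a triad, comparing `|k| ^ a`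
with the power `a` of the frequency of one argument then costs the power `b ≥ |a|` of the other and
leaves the weight `|m| ^ (-b) + |n| ^ (-b) + |k| ^ (-b)`. For `b > 1` this weight is square summable
on `ℤ²`, and Cauchy–Schwarz over the triads gives the estimate.

The only case of the theorem with `a* = 1` is `a = 0`, where this argument diverges logarithmically.
There `⟨B[v, w], w⟩ = 0` by the reflection `(m, n, k) ↦ (m, -k, -n)` of triads. For `⟨B[w, v], w⟩`
the symbol is bounded by `2π|n|` instead, and the weight `(1 + λ_k / N²)⁻¹`, of `ℓ²` norm `O(N)`, is
inserted; the choice `N = ‖w‖_{Ḣ¹} / ‖w‖_{Ḣ⁰}` is a Fourier version of Ladyzhenskaya's inequality.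
-/

/-- The `ℓ²` norm of a real family; it is the junk value `0` if the squares are not summable. -/
def l2Norm {ι : Type*} (X : ι → ℝ) : ℝ := √(∑' i, X i ^ 2)

/-- Nonnegative square-summable families, the class to which the Cauchy–Schwarz inequality for
`l2Norm` applies. -/
structure NonnegL2 {ι : Type*} (X : ι → ℝ) : Prop where
  nonneg : ∀ i, 0 ≤ X i
  summable_sq : Summable fun i => X i ^ 2

section NonnegL2

variable {ι ι' κ : Type*}

lemma l2Norm_nonneg (X : ι → ℝ) : 0 ≤ l2Norm X := Real.sqrt_nonneg _

lemma NonnegL2.l2Norm_pos {X : ι → ℝ} (hX : NonnegL2 X) {i : ι} (hi : 0 < X i) : 0 < l2Norm X :=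
  Real.sqrt_pos.mpr (hX.summable_sq.tsum_pos (fun _ => sq_nonneg _) i (pow_pos hi 2))

lemma NonnegL2.summable_mul_and_tsum_mul_le {X Y : ι → ℝ} (hX : NonnegL2 X) (hY : NonnegL2 Y) :
    (Summable fun i => X i * Y i) ∧ ∑' i, X i * Y i ≤ l2Norm X * l2Norm Y := by
  have := Real.summable_and_inner_le_Lp_mul_Lq_tsum_of_nonneg
    Real.HolderConjugate.two_two hX.nonneg hY.nonneg
    (by simpa using hX.summable_sq) (by simpa using hY.summable_sq)
  simpa [l2Norm, Real.sqrt_eq_rpow] using this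

lemma NonnegL2.summable_sq_mul_sq {X : ι → ℝ} {Y : ι' → ℝ} (hX : NonnegL2 X) (hY : NonnegL2 Y) :
    Summable fun q : ι × ι' => X q.1 ^ 2 * Y q.2 ^ 2 :=
  hX.summable_sq.mul_of_nonneg hY.summable_sq (fun _ => sq_nonneg _) (fun _ => sq_nonneg _)

lemma NonnegL2.mul_comp {X : ι → ℝ} {Y : ι' → ℝ} {j : κ → ι × ι'} (hX : NonnegL2 X)
    (hY : NonnegL2 Y) (hj : Function.Injective j) :
    NonnegL2 fun t => X (j t).1 * Y (j t).2 where
  nonneg _ := mul_nonneg (hX.nonneg _) (hY.nonneg _)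
  summable_sq := by
    simp only [mul_pow]
    exact (hX.summable_sq_mul_sq hY).comp_injective hj

lemma NonnegL2.l2Norm_mul_comp_le {X : ι → ℝ} {Y : ι' → ℝ} {j : κ → ι × ι'} (hX : NonnegL2 X)
    (hY : NonnegL2 Y) (hj : Function.Injective j) :
    l2Norm (fun t => X (j t).1 * Y (j t).2) ≤ l2Norm X * l2Norm Y := by
  rw [l2Norm, l2Norm, l2Norm, ← Real.sqrt_mul (tsum_nonneg fun _ => sq_nonneg _),
    hX.summable_sq.tsum_mul_tsum hY.summable_sq (hX.summable_sq_mul_sq hY)]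
  refine Real.sqrt_le_sqrt ((hX.mul_comp hY hj).summable_sq.tsum_le_tsum_of_inj j hj
    (fun _ _ => by positivity) (fun t => (mul_pow _ _ 2).le) (hX.summable_sq_mul_sq hY))

lemma NonnegL2.summable_and_tsum_mul_comp_le {α β γ δ : Type*} {X : α → ℝ} {Y : β → ℝ}
    {Z : γ → ℝ} {P : δ → ℝ} {i : κ → α × β} {j : κ → γ × δ}
    (hX : NonnegL2 X) (hY : NonnegL2 Y) (hZ : NonnegL2 Z) (hP : NonnegL2 P)
    (hi : Function.Injective i) (hj : Function.Injective j) :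
    (Summable fun t => X (i t).1 * Y (i t).2 * (Z (j t).1 * P (j t).2)) ∧
      ∑' t, X (i t).1 * Y (i t).2 * (Z (j t).1 * P (j t).2) ≤
        l2Norm X * l2Norm Y * (l2Norm Z * l2Norm P) := by
  obtain ⟨hsum, hle⟩ := (hX.mul_comp hY hi).summable_mul_and_tsum_mul_le (hZ.mul_comp hP hj)
  exact ⟨hsum, hle.trans (mul_le_mul (hX.l2Norm_mul_comp_le hY hi) (hZ.l2Norm_mul_comp_le hP hj)
    (l2Norm_nonneg _) (mul_nonneg (l2Norm_nonneg _) (l2Norm_nonneg _)))⟩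

end NonnegL2

/-- An interacting triad of Fourier modes: `fst` and `snd` are the frequencies of the two arguments
of the bilinear form and `sum` is that of the output. Triads index the trilinear form
`⟨B[c, d], e⟩`. -/
structure Triad where
  fst : Freq
  snd : Freq
  sum : Freq
  add_eq : fst.1 + snd.1 = sum.1

namespace Triad

lemma injective_fst_snd : Function.Injective fun t : Triad => (t.fst, t.snd) := by
  rintro ⟨m, n, k, h⟩ ⟨m', n', k', h'⟩ heq
  obtain ⟨rfl, rfl⟩ := Prod.mk.inj heq
  obtain rfl : k = k' := Subtype.ext (h.symm.trans h')
  rfl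

lemma injective_sum_fst : Function.Injective fun t : Triad => (t.sum, t.fst) := by
  rintro ⟨m, n, k, h⟩ ⟨m', n', k', h'⟩ heq
  obtain ⟨rfl, rfl⟩ := Prod.mk.inj heq
  obtain rfl : n = n' := Subtype.ext (add_left_cancel (h.trans h'.symm))
  rfl

lemma injective_sum_snd : Function.Injective fun t : Triad => (t.sum, t.snd) := by
  rintro ⟨m, n, k, h⟩ ⟨m', n', k', h'⟩ heq
  obtain ⟨rfl, rfl⟩ := Prod.mk.inj heq
  obtain rfl : m = m' := Subtype.ext (add_right_cancel (h.trans h'.symm))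
  rfl

lemma summable_and_tsum_le {X Y Z P : Freq → ℝ} (hX : NonnegL2 X) (hY : NonnegL2 Y)
    (hZ : NonnegL2 Z) (hP : NonnegL2 P) :
    (Summable fun t : Triad => X t.fst * Y t.snd * Z t.sum * (P t.fst + P t.snd + P t.sum)) ∧
      ∑' t : Triad, X t.fst * Y t.snd * Z t.sum * (P t.fst + P t.snd + P t.sum) ≤
        3 * (l2Norm X * l2Norm Y * l2Norm Z * l2Norm P) := by
  obtain ⟨hs₁, hle₁⟩ := hX.summable_and_tsum_mul_comp_le hY hZ hP injective_fst_snd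
    injective_sum_fst
  obtain ⟨hs₂, hle₂⟩ := hX.summable_and_tsum_mul_comp_le hY hZ hP injective_fst_snd
    injective_sum_snd
  obtain ⟨hs₃, hle₃⟩ := hZ.summable_and_tsum_mul_comp_le hX hP hY injective_sum_fst
    injective_sum_snd
  have hsplit (t : Triad) : X t.fst * Y t.snd * Z t.sum * (P t.fst + P t.snd + P t.sum) =
      X t.fst * Y t.snd * (Z t.sum * P t.fst) + X t.fst * Y t.snd * (Z t.sum * P t.snd) +
        Z t.sum * X t.fst * (P t.sum * Y t.snd) := by ring
  simp only [hsplit]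
  refine ⟨(hs₁.add hs₂).add hs₃, ?_⟩
  rw [(hs₁.add hs₂).tsum_add hs₃, hs₁.tsum_add hs₂]
  linarith

end Triad

lemma one_le_knormSq (k : Freq) : 1 ≤ knormSq k := by
  obtain ⟨⟨x, y⟩, hk⟩ := k
  have hne : x ^ 2 + y ^ 2 ≠ 0 := fun h => hk <| by
    simpa [Prod.ext_iff] using
      (add_eq_zero_iff_of_nonneg (sq_nonneg x) (sq_nonneg y)).mp h
  have hpos : 0 < x ^ 2 + y ^ 2 := lt_of_le_of_ne (by positivity) hne.symm
  have hone : (1 : ℝ) ≤ (x : ℝ) ^ 2 + (y : ℝ) ^ 2 := by exact_mod_cast hpos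
  exact hone

lemma knormSq_le_lam (k : Freq) : knormSq k ≤ lam k :=
  le_mul_of_one_le_left (zero_le_one.trans (one_le_knormSq k)) (by nlinarith [Real.pi_gt_three])

lemma one_le_lam (k : Freq) : 1 ≤ lam k := (one_le_knormSq k).trans (knormSq_le_lam k)

lemma lam_pos (k : Freq) : 0 < lam k := zero_lt_one.trans_le (one_le_lam k)

/-- The wavenumber `2π|k|`, that is, the square root of the Laplace eigenvalue `lam k`. -/
def wavenumber (k : Freq) : ℝ := √(lam k)

lemma wavenumber_pos (k : Freq) : 0 < wavenumber k := Real.sqrt_pos.mpr (lam_pos k)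

lemma wavenumber_rpow_two_mul (α : ℝ) (k : Freq) : wavenumber k ^ (2 * α) = lam k ^ α := by
  rw [Real.rpow_mul (wavenumber_pos k).le, Real.rpow_two, wavenumber, Real.sq_sqrt (lam_pos k).le]

lemma wavenumber_rpow_sq (α : ℝ) (k : Freq) : (wavenumber k ^ α) ^ 2 = lam k ^ α := by
  rw [← wavenumber_rpow_two_mul, ← Real.rpow_mul_natCast (wavenumber_pos k).le, mul_comm]
  rfl

lemma wavenumber_eq_two_pi_mul_sqrt (k : Freq) : wavenumber k = 2 * Real.pi * √(knormSq k) := by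
  rw [wavenumber, lam, show 4 * Real.pi ^ 2 = (2 * Real.pi) ^ 2 by ring,
    Real.sqrt_mul (sq_nonneg _), Real.sqrt_sq (by positivity)]

/-- The frequency `k` as the complex number `k₁ + i k₂`, whose modulus is `|k|`. -/
def freqComplex (k : Freq) : ℂ := ⟨k.1.1, k.1.2⟩

lemma wavenumber_eq_two_pi_mul_norm (k : Freq) : wavenumber k = 2 * Real.pi * ‖freqComplex k‖ := by
  rw [wavenumber_eq_two_pi_mul_sqrt, Complex.norm_def, Complex.normSq_apply, knormSq, sq, sq]
  rfl

lemma norm_le_wavenumber (k : Freq) : ‖![k.1.1, k.1.2]‖ ≤ wavenumber k := by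
  have hk : ‖freqComplex k‖ ≤ wavenumber k := by
    rw [wavenumber_eq_two_pi_mul_norm]
    exact le_mul_of_one_le_left (norm_nonneg _) (by linarith [Real.pi_gt_three])
  refine (pi_norm_le_iff_of_nonneg (wavenumber_pos k).le).mpr fun i => ?_
  fin_cases i
  · exact (Complex.abs_re_le_norm (freqComplex k)).trans hk
  · exact (Complex.abs_im_le_norm (freqComplex k)).trans hk

lemma summable_wavenumber_rpow {r : ℝ} (hr : 2 < r) : Summable fun k => wavenumber k ^ (-r) := by
  let vec (k : Freq) : Fin 2 → ℤ := ![k.1.1, k.1.2]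
  have hvec : Function.Injective vec := fun k l h =>
    Subtype.ext (Prod.ext (congrFun h 0) (congrFun h 1))
  have hvec_ne (k : Freq) : vec k ≠ 0 := fun h =>
    k.2 (Prod.ext (congrFun h 0) (congrFun h 1))
  refine Summable.of_nonneg_of_le (fun k => Real.rpow_nonneg (wavenumber_pos k).le _) (fun k => ?_)
    ((EisensteinSeries.summable_one_div_norm_rpow hr).comp_injective hvec)
  exact Real.rpow_le_rpow_of_nonpos (norm_pos_iff.mpr (hvec_ne k)) (norm_le_wavenumber k)
    (by linarith)

lemma nonnegL2_wavenumber_rpow {b : ℝ} (hb : 1 < b) : NonnegL2 fun k => wavenumber k ^ (-b) where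
  nonneg k := Real.rpow_nonneg (wavenumber_pos k).le _
  summable_sq := by
    simp only [wavenumber_rpow_sq, ← wavenumber_rpow_two_mul, mul_neg]
    exact summable_wavenumber_rpow (by linarith)

namespace Triad

lemma freqComplex_sum (t : Triad) :
    freqComplex t.sum = freqComplex t.fst + freqComplex t.snd := by
  simp [Complex.ext_iff, freqComplex, ← t.add_eq]

lemma wavenumber_sum_le (t : Triad) :
    wavenumber t.sum ≤ wavenumber t.fst + wavenumber t.snd := by
  simp only [wavenumber_eq_two_pi_mul_norm, ← mul_add, t.freqComplex_sum]
  gcongr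
  exact norm_add_le _ _

lemma wavenumber_snd_le (t : Triad) :
    wavenumber t.snd ≤ wavenumber t.fst + wavenumber t.sum := by
  simp only [wavenumber_eq_two_pi_mul_norm, ← mul_add, t.freqComplex_sum]
  gcongr
  rw [add_comm, add_comm (freqComplex t.fst)]
  exact norm_le_add_norm_add _ _

lemma wavenumber_fst_le (t : Triad) :
    wavenumber t.fst ≤ wavenumber t.snd + wavenumber t.sum := by
  simp only [wavenumber_eq_two_pi_mul_norm, ← mul_add, t.freqComplex_sum]
  gcongr
  rw [add_comm]
  exact norm_le_add_norm_add _ _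

end Triad

section Symbol

lemma abs_dotR_le (x y : ℝ × ℝ) : |dotR x y| ≤ √(dotR x x) * √(dotR y y) := by
  have hx : 0 ≤ dotR x x := add_nonneg (mul_self_nonneg _) (mul_self_nonneg _)
  rw [← Real.sqrt_mul hx]
  refine Real.abs_le_sqrt ?_
  simp only [dotR]
  nlinarith [sq_nonneg (x.1 * y.2 - x.2 * y.1)]

lemma dotR_fvec_self (k : Freq) : dotR (fvec k) (fvec k) = knormSq k := by
  simp only [dotR, fvec, knormSq, sq]

lemma dotR_evec_self (k : Freq) : dotR (evec k) (evec k) = 1 := by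
  have hk : 0 < knormSq k := zero_lt_one.trans_le (one_le_knormSq k)
  simp only [dotR, evec, ← sq, div_pow, Real.sq_sqrt hk.le]
  rw [← add_div, neg_sq, add_comm]
  exact div_self hk.ne'

lemma dotR_evec_fvec_self (k : Freq) : dotR (evec k) (fvec k) = 0 := by
  simp only [dotR, evec, fvec]
  ring

lemma abs_dotR_evec_evec_le_one (k l : Freq) : |dotR (evec k) (evec l)| ≤ 1 := by
  simpa [dotR_evec_self] using abs_dotR_le (evec k) (evec l)

lemma two_pi_mul_abs_dotR_evec_fvec_le (k l : Freq) :
    2 * Real.pi * |dotR (evec k) (fvec l)| ≤ wavenumber l := by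
  rw [wavenumber_eq_two_pi_mul_sqrt]
  gcongr
  simpa [dotR_evec_self, dotR_fvec_self] using abs_dotR_le (evec k) (fvec l)

/-- The transport symbol sees only the output frequency, because `evec t.fst ⊥ t.fst`: this is
`(u · ∇) v = div (u ⊗ v)` on the Fourier side. -/
lemma Triad.dotR_evec_fst_fvec_snd (t : Triad) :
    dotR (evec t.fst) (fvec t.snd) = dotR (evec t.fst) (fvec t.sum) := by
  have hsum : fvec t.sum = fvec t.fst + fvec t.snd := by
    simp [fvec, ← t.add_eq]
  have hadd : dotR (evec t.fst) (fvec t.fst + fvec t.snd) =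
      dotR (evec t.fst) (fvec t.fst) + dotR (evec t.fst) (fvec t.snd) := by
    simp only [dotR, Prod.fst_add, Prod.snd_add]
    ring
  rw [hsum, hadd, dotR_evec_fvec_self, zero_add]

end Symbol

section TrilinearForm

variable (a : ℝ) (c d e : Coef)

/-- The contribution of the triad `t` to the trilinear form `⟨B[c, d], e⟩` in `Ḣ^a`. -/
def triadTerm (t : Triad) : ℂ :=
  ((lam t.sum ^ a : ℝ) : ℂ) * (((2 * Real.pi : ℝ) : ℂ) * Complex.I *
    (c t.fst * d t.snd * ((dotR (evec t.fst) (fvec t.snd) *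
      dotR (evec t.snd) (evec t.sum) : ℝ) : ℂ)) * (starRingEnd ℂ) (e t.sum))

lemma norm_triadTerm_le (t : Triad) :
    ‖triadTerm a c d e t‖ ≤ lam t.sum ^ a * (‖c t.fst‖ * ‖d t.snd‖ * ‖e t.sum‖ *
      (2 * Real.pi * |dotR (evec t.fst) (fvec t.snd)|)) := by
  have hnorm : ‖triadTerm a c d e t‖ = lam t.sum ^ a * (‖c t.fst‖ * ‖d t.snd‖ * ‖e t.sum‖ *
      (2 * Real.pi * |dotR (evec t.fst) (fvec t.snd)|)) * |dotR (evec t.snd) (evec t.sum)| := by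
    simp only [triadTerm, norm_mul, Complex.norm_real, Complex.norm_I, Complex.norm_conj,
      Real.norm_eq_abs, abs_two, abs_of_pos Real.pi_pos,
      abs_of_pos (Real.rpow_pos_of_pos (lam_pos t.sum) a)]
    ring
  rw [hnorm]
  have := Real.rpow_pos_of_pos (lam_pos t.sum) a
  exact mul_le_of_le_one_right (by positivity) (abs_dotR_evec_evec_le_one _ _)

lemma norm_triadTerm_le_wavenumber_snd (t : Triad) :
    ‖triadTerm a c d e t‖ ≤
      lam t.sum ^ a * (‖c t.fst‖ * ‖d t.snd‖ * ‖e t.sum‖ * wavenumber t.snd) := by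
  refine (norm_triadTerm_le a c d e t).trans ?_
  have := Real.rpow_pos_of_pos (lam_pos t.sum) a
  gcongr
  exact two_pi_mul_abs_dotR_evec_fvec_le _ _

lemma norm_triadTerm_le_wavenumber_sum (t : Triad) :
    ‖triadTerm a c d e t‖ ≤
      lam t.sum ^ a * (‖c t.fst‖ * ‖d t.snd‖ * ‖e t.sum‖ * wavenumber t.sum) := by
  refine (norm_triadTerm_le a c d e t).trans ?_
  have := Real.rpow_pos_of_pos (lam_pos t.sum) a
  rw [t.dotR_evec_fst_fvec_snd]
  gcongr
  exact two_pi_mul_abs_dotR_evec_fvec_le _ _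

variable {a c d e}

lemma hInner_Bc_eq (hs : Summable (triadTerm a c d e)) :
    hInner a (Bc c d) e = (∑' t, triadTerm a c d e t).re := by
  let F (p : Freq × Freq) : ℂ := ((lam p.1 ^ a : ℝ) : ℂ) * (((2 * Real.pi : ℝ) : ℂ) * Complex.I *
    (if h : p.1.1 - p.2.1 ≠ 0 then
      c p.2 * d ⟨p.1.1 - p.2.1, h⟩ * (((dotR (evec p.2) (fvec ⟨p.1.1 - p.2.1, h⟩) *
        dotR (evec ⟨p.1.1 - p.2.1, h⟩) (evec p.1) : ℝ)) : ℂ)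
    else 0) * (starRingEnd ℂ) (e p.1))
  have hF : F ∘ (fun t : Triad => (t.sum, t.fst)) = triadTerm a c d e := by
    funext t
    have hsnd : t.sum.1 - t.fst.1 = t.snd.1 := sub_eq_of_eq_add' t.add_eq.symm
    have hne : t.sum.1 - t.fst.1 ≠ 0 := hsnd ▸ t.snd.2
    have hfreq : (⟨t.sum.1 - t.fst.1, hne⟩ : Freq) = t.snd := Subtype.ext hsnd
    simp only [F, Function.comp_apply, dif_pos hne, hfreq, triadTerm]
  have hF_zero : ∀ p ∉ range (fun t : Triad => (t.sum, t.fst)), F p = 0 := by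
    rintro ⟨k, m⟩ hp
    have h : ¬ (k.1 - m.1 ≠ 0) := fun h => hp ⟨⟨m, ⟨k.1 - m.1, h⟩, k, add_sub_cancel _ _⟩, rfl⟩
    simp only [F, dif_neg h, mul_zero, zero_mul]
  have hsF : Summable F :=
    (Triad.injective_sum_fst.summable_iff hF_zero).mp (hF ▸ hs)
  have htsum : ∑' t, triadTerm a c d e t = ∑' p, F p :=
    hF ▸ Triad.injective_sum_fst.tsum_eq (Function.support_subset_iff'.mpr hF_zero)
  rw [htsum, hsF.tsum_prod, Complex.re_tsum hsF.prod]
  refine tsum_congr fun k => ?_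
  simp only [F]
  rw [tsum_mul_left, tsum_mul_right, tsum_mul_left, Complex.re_ofReal_mul]
  rfl

lemma abs_hInner_Bc_le_tsum_of_norm_le {M : Triad → ℝ} (hM : Summable M)
    (hle : ∀ t, ‖triadTerm a c d e t‖ ≤ M t) : |hInner a (Bc c d) e| ≤ ∑' t, M t := by
  rw [hInner_Bc_eq (.of_norm_bounded hM hle)]
  exact (Complex.abs_re_le_norm _).trans (tsum_of_norm_bounded hM.hasSum hle)

lemma summable_triadTerm_and_abs_hInner_Bc_le {X Y Z P : Freq → ℝ} {K : ℝ} (hK : 0 ≤ K)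
    (hX : NonnegL2 X) (hY : NonnegL2 Y) (hZ : NonnegL2 Z) (hP : NonnegL2 P)
    (hle : ∀ t : Triad, ‖triadTerm a c d e t‖ ≤
      K * (X t.fst * Y t.snd * Z t.sum * (P t.fst + P t.snd + P t.sum))) :
    Summable (triadTerm a c d e) ∧
      |hInner a (Bc c d) e| ≤ K * (3 * (l2Norm X * l2Norm Y * l2Norm Z * l2Norm P)) := by
  obtain ⟨hsum, hbound⟩ := Triad.summable_and_tsum_le hX hY hZ hP
  refine ⟨.of_norm_bounded (hsum.mul_left K) hle,
    (abs_hInner_Bc_le_tsum_of_norm_le (hsum.mul_left K) hle).trans ?_⟩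
  rw [tsum_mul_left]
  gcongr

end TrilinearForm

section Sobolev

/-- The modulus of the Fourier coefficients weighted so that its `ℓ²` norm is the `Ḣ^α` norm. -/
def sobolevModulus (α : ℝ) (c : Coef) (k : Freq) : ℝ := wavenumber k ^ α * ‖c k‖

variable {α β : ℝ} {c : Coef}

lemma sobolevModulus_sq (α : ℝ) (c : Coef) (k : Freq) :
    sobolevModulus α c k ^ 2 = lam k ^ α * ‖c k‖ ^ 2 := by
  rw [sobolevModulus, mul_pow, wavenumber_rpow_sq]

lemma sobolevModulus_nonneg (α : ℝ) (c : Coef) (k : Freq) : 0 ≤ sobolevModulus α c k :=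
  mul_nonneg (Real.rpow_nonneg (wavenumber_pos k).le _) (norm_nonneg _)

lemma FinH.nonnegL2 (hc : FinH α c) : NonnegL2 (sobolevModulus α c) where
  nonneg := sobolevModulus_nonneg α c
  summable_sq := hc.congr fun k => (sobolevModulus_sq α c k).symm

lemma l2Norm_sobolevModulus (α : ℝ) (c : Coef) : l2Norm (sobolevModulus α c) = hN α c := by
  simp only [l2Norm, hN, hSq, sobolevModulus_sq]

lemma hSq_term_nonneg (α : ℝ) (c : Coef) (k : Freq) : 0 ≤ lam k ^ α * ‖c k‖ ^ 2 :=
  sobolevModulus_sq α c k ▸ sq_nonneg _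

lemma hSq_term_mono (h : α ≤ β) (c : Coef) (k : Freq) :
    lam k ^ α * ‖c k‖ ^ 2 ≤ lam k ^ β * ‖c k‖ ^ 2 := by
  gcongr
  exact one_le_lam k

lemma FinH.mono (h : α ≤ β) (hc : FinH β c) : FinH α c :=
  .of_nonneg_of_le (hSq_term_nonneg α c) (hSq_term_mono h c) hc

lemma hN_nonneg (α : ℝ) (c : Coef) : 0 ≤ hN α c := Real.sqrt_nonneg _

lemma sq_hN (α : ℝ) (c : Coef) : hN α c ^ 2 = hSq α c :=
  Real.sq_sqrt (tsum_nonneg (hSq_term_nonneg α c))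

lemma FinH.hN_le (h : α ≤ β) (hc : FinH β c) : hN α c ≤ hN β c :=
  Real.sqrt_le_sqrt ((hc.mono h).tsum_le_tsum (hSq_term_mono h c) hc)

lemma FinH.eq_zero_of_hN_eq_zero (hc : FinH α c) (h : hN α c = 0) : c = 0 := by
  have hSq_zero : hSq α c = 0 := by rw [← sq_hN, h, zero_pow two_ne_zero]
  have hterm_zero := (hasSum_zero_iff_of_nonneg (hSq_term_nonneg α c)).mp <|
    (Summable.hasSum_iff hc).mpr hSq_zero
  funext k
  simpa [(Real.rpow_pos_of_pos (lam_pos k) α).ne'] using congrFun hterm_zero k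

end Sobolev

section NoncriticalEstimates

lemma one_add_rpow_le {r b : ℝ} (hr : 0 ≤ r) (hb : 0 ≤ b) :
    (1 + r) ^ b ≤ 2 ^ b * (1 + r ^ b) := by
  have hmax : max 1 r ^ b ≤ 1 + r ^ b := by
    rcases max_choice 1 r with h | h <;> rw [h]
    · simpa using Real.rpow_nonneg hr b
    · simp
  calc (1 + r) ^ b ≤ (2 * max 1 r) ^ b := by
        gcongr
        linarith [le_max_left 1 r, le_max_right 1 r]
    _ = 2 ^ b * max 1 r ^ b := Real.mul_rpow zero_le_two (by positivity)
    _ ≤ 2 ^ b * (1 + r ^ b) := by gcongr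

lemma rpow_le_of_le_one_add_of_inv_le_one_add {z r r' a b : ℝ} (hz : 0 < z) (hr : 0 ≤ r)
    (hr' : 0 ≤ r') (hzr : z ≤ 1 + r) (hzr' : z⁻¹ ≤ 1 + r') (hab : |a| ≤ b) :
    z ^ a ≤ 2 ^ b * (1 + r ^ b + r' ^ b) := by
  have hb : 0 ≤ b := (abs_nonneg a).trans hab
  have hrb := Real.rpow_nonneg hr b
  have hrb' := Real.rpow_nonneg hr' b
  have hmono {x ρ α : ℝ} (hx : 1 ≤ x) (hxρ : x ≤ 1 + ρ) (hρ : 0 ≤ ρ) (hα : α ≤ b) :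
      x ^ α ≤ 2 ^ b * (1 + ρ ^ b) :=
    ((Real.rpow_le_rpow_of_exponent_le hx hα).trans
      (Real.rpow_le_rpow (zero_le_one.trans hx) hxρ hb)).trans (one_add_rpow_le hρ hb)
  rcases le_total 1 z with h | h
  · refine (hmono h hzr hr ((le_abs_self a).trans hab)).trans ?_
    gcongr 2 ^ b * ?_
    linarith
  · rw [← inv_inv z, Real.inv_rpow (inv_pos.mpr hz).le, ← Real.rpow_neg (inv_pos.mpr hz).le]
    refine (hmono ((one_le_inv₀ hz).mpr h) hzr' hr' ((neg_le_abs a).trans hab)).trans ?_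
    gcongr 2 ^ b * ?_
    linarith

/-- The last factor is the gain: over the frequencies of the torus, the powers `-b` of the
wavenumbers are square summable when `1 < b`. -/
lemma rpow_le_of_le_add_of_le_add {p q s a b : ℝ} (hp : 0 < p) (hq : 0 < q) (hs : 0 < s)
    (hsq : s ≤ p + q) (hqs : q ≤ p + s) (hab : |a| ≤ b) :
    s ^ a ≤ 2 ^ b * (p ^ b * q ^ a * (p ^ (-b) + q ^ (-b) + s ^ (-b))) := by
  have hz : (s / q) ^ a ≤ 2 ^ b * (1 + (p / q) ^ b + (p / s) ^ b) := by
    refine rpow_le_of_le_one_add_of_inv_le_one_add (by positivity) (by positivity)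
      (by positivity) ?_ ?_ hab
    · rw [one_add_div hq.ne', add_comm q]
      gcongr
    · rw [one_add_div hs.ne', add_comm s, inv_div]
      gcongr
  have hweight : p ^ b * (p ^ (-b) + q ^ (-b) + s ^ (-b)) = 1 + (p / q) ^ b + (p / s) ^ b := by
    rw [Real.div_rpow hp.le hq.le, Real.div_rpow hp.le hs.le, Real.rpow_neg hp.le,
      Real.rpow_neg hq.le, Real.rpow_neg hs.le, mul_add, mul_add,
      mul_inv_cancel₀ (Real.rpow_pos_of_pos hp b).ne', div_eq_mul_inv, div_eq_mul_inv]
  calc s ^ a = q ^ a * (s / q) ^ a := by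
        rw [← Real.mul_rpow hq.le (by positivity), mul_div_cancel₀ s hq.ne']
    _ ≤ q ^ a * (2 ^ b * (1 + (p / q) ^ b + (p / s) ^ b)) := by gcongr
    _ = 2 ^ b * (p ^ b * q ^ a * (p ^ (-b) + q ^ (-b) + s ^ (-b))) := by
        rw [← hweight]
        ring

variable {a b : ℝ} {c d e : Coef}

lemma lam_rpow_mul_wavenumber (a : ℝ) (k : Freq) :
    lam k ^ a * wavenumber k = wavenumber k ^ a * wavenumber k ^ (a + 1) := by
  rw [← wavenumber_rpow_sq, Real.rpow_add_one (wavenumber_pos k).ne', sq, mul_assoc]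

lemma norm_triadTerm_le_of_rpow_le {α β W : ℝ} {t : Triad}
    (h : wavenumber t.sum ^ a ≤ 2 ^ b * (wavenumber t.fst ^ α * wavenumber t.snd ^ β * W)) :
    ‖triadTerm a c d e t‖ ≤ 2 ^ b * (sobolevModulus α c t.fst * sobolevModulus β d t.snd *
      sobolevModulus (a + 1) e t.sum * W) := by
  have hpos := Real.rpow_pos_of_pos (wavenumber_pos t.sum) (a + 1)
  calc ‖triadTerm a c d e t‖
      ≤ lam t.sum ^ a * (‖c t.fst‖ * ‖d t.snd‖ * ‖e t.sum‖ * wavenumber t.sum) :=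
        norm_triadTerm_le_wavenumber_sum a c d e t
    _ = wavenumber t.sum ^ a *
          (‖c t.fst‖ * ‖d t.snd‖ * (wavenumber t.sum ^ (a + 1) * ‖e t.sum‖)) := by
        linear_combination (‖c t.fst‖ * ‖d t.snd‖ * ‖e t.sum‖) * lam_rpow_mul_wavenumber a t.sum
    _ ≤ 2 ^ b * (wavenumber t.fst ^ α * wavenumber t.snd ^ β * W) *
          (‖c t.fst‖ * ‖d t.snd‖ * (wavenumber t.sum ^ (a + 1) * ‖e t.sum‖)) := by gcongr
    _ = 2 ^ b * (sobolevModulus α c t.fst * sobolevModulus β d t.snd *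
          sobolevModulus (a + 1) e t.sum * W) := by
        simp only [sobolevModulus]
        ring

/-- The constant of the noncritical estimates; it is meaningful for `1 < b`. -/
def noncriticalConst (b : ℝ) : ℝ := 2 ^ b * (3 * l2Norm fun k => wavenumber k ^ (-b))

lemma noncriticalConst_pos (hb : 1 < b) : 0 < noncriticalConst b := by
  have hl2 : 0 < l2Norm fun k => wavenumber k ^ (-b) :=
    (nonnegL2_wavenumber_rpow hb).l2Norm_pos (i := ⟨(1, 0), by simp⟩)
      (Real.rpow_pos_of_pos (wavenumber_pos _) _)
  rw [noncriticalConst]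
  positivity

lemma abs_hInner_Bc_le_of_rpow_le {α β : ℝ} (hb : 1 < b) (hc : FinH α c) (hd : FinH β d)
    (he : FinH (a + 1) e)
    (h : ∀ t : Triad, wavenumber t.sum ^ a ≤ 2 ^ b * (wavenumber t.fst ^ α *
      wavenumber t.snd ^ β * (wavenumber t.fst ^ (-b) + wavenumber t.snd ^ (-b) +
        wavenumber t.sum ^ (-b)))) :
    |hInner a (Bc c d) e| ≤ noncriticalConst b * hN α c * hN β d * hN (a + 1) e := by
  refine (summable_triadTerm_and_abs_hInner_Bc_le (Real.rpow_nonneg zero_le_two b) hc.nonnegL2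
    hd.nonnegL2 he.nonnegL2 (nonnegL2_wavenumber_rpow hb)
    fun t => norm_triadTerm_le_of_rpow_le (h t)).2.trans_eq ?_
  simp only [l2Norm_sobolevModulus, noncriticalConst]
  ring

theorem abs_hInner_Bc_le_of_one_lt_left (hb : 1 < b) (hab : |a| ≤ b) (hc : FinH b c)
    (hd : FinH a d) (he : FinH (a + 1) e) :
    |hInner a (Bc c d) e| ≤ noncriticalConst b * hN b c * hN a d * hN (a + 1) e :=
  abs_hInner_Bc_le_of_rpow_le hb hc hd he fun t =>
    rpow_le_of_le_add_of_le_add (wavenumber_pos _) (wavenumber_pos _) (wavenumber_pos _)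
      t.wavenumber_sum_le t.wavenumber_snd_le hab

theorem abs_hInner_Bc_le_of_one_lt_right (hb : 1 < b) (hab : |a| ≤ b) (hc : FinH a c)
    (hd : FinH b d) (he : FinH (a + 1) e) :
    |hInner a (Bc c d) e| ≤ noncriticalConst b * hN a c * hN b d * hN (a + 1) e :=
  abs_hInner_Bc_le_of_rpow_le hb hc hd he fun t =>
    (rpow_le_of_le_add_of_le_add (wavenumber_pos t.snd) (wavenumber_pos t.fst)
      (wavenumber_pos t.sum) (by linarith [t.wavenumber_sum_le]) t.wavenumber_fst_le
        hab).trans_eq (by ring)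

end NoncriticalEstimates

section CutoffWeight

/-- The weight `(1 + λ_k / N²)⁻¹`, a smooth cutoff to the wavenumbers below `N`. -/
def cutoffWeight (N : ℝ) (k : Freq) : ℝ := (1 + lam k / N ^ 2)⁻¹

variable {N : ℝ}

lemma sum_range_inv_one_add_sq_le (hN : 0 < N) (n : ℕ) :
    ∑ i ∈ Finset.range n, (1 + (((i : ℝ) + 1) / N) ^ 2)⁻¹ ≤ N * (Real.pi / 2) := by
  have hanti : AntitoneOn (fun x : ℝ => (1 + (x / N) ^ 2)⁻¹) (Icc 0 (0 + n)) := by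
    intro x hx y _ hxy
    have := hx.1
    dsimp only
    gcongr
  calc ∑ i ∈ Finset.range n, (1 + (((i : ℝ) + 1) / N) ^ 2)⁻¹
      ≤ ∫ x in (0 : ℝ)..0 + n, (1 + (x / N) ^ 2)⁻¹ := by simpa using hanti.sum_le_integral
    _ = N * Real.arctan (n / N) := by
      rw [intervalIntegral.integral_comp_div (fun x => (1 + x ^ 2)⁻¹) hN.ne']
      simp
    _ ≤ N * (Real.pi / 2) := by
      gcongr
      exact (Real.arctan_lt_pi_div_two _).le

lemma summable_and_tsum_int_inv_one_add_sq_le (hN : 1 ≤ N) :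
    (Summable fun m : ℤ => (1 + ((m : ℝ) / N) ^ 2)⁻¹) ∧
      ∑' m : ℤ, (1 + ((m : ℝ) / N) ^ 2)⁻¹ ≤ 5 * N := by
  have hN₀ : 0 < N := zero_lt_one.trans_le hN
  have hnonneg (i : ℕ) : 0 ≤ (1 + (((i : ℝ) + 1) / N) ^ 2)⁻¹ := by positivity
  have hsum := summable_of_sum_range_le hnonneg (sum_range_inv_one_add_sq_le hN₀)
  have htsum := Real.tsum_le_of_sum_range_le hnonneg (sum_range_inv_one_add_sq_le hN₀)
  have hhas : HasSum (fun m : ℤ => (1 + ((m : ℝ) / N) ^ 2)⁻¹) _ :=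
    .of_add_one_of_neg_add_one (by simpa using hsum.hasSum)
      (by simpa only [Int.cast_neg, Int.cast_add, Int.cast_natCast, Int.cast_one, neg_div,
        even_two.neg_pow] using hsum.hasSum)
  refine ⟨hhas.summable, hhas.tsum_eq.trans_le ?_⟩
  simp only [Int.cast_zero, zero_div]
  nlinarith [Real.pi_lt_four]

lemma cutoffWeight_sq_le (hN : 0 < N) (k : Freq) :
    cutoffWeight N k ^ 2 ≤
      (1 + ((k.1.1 : ℝ) / N) ^ 2)⁻¹ * (1 + ((k.1.2 : ℝ) / N) ^ 2)⁻¹ := by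
  have hlam : ((k.1.1 : ℝ) / N) ^ 2 + ((k.1.2 : ℝ) / N) ^ 2 ≤ lam k / N ^ 2 := by
    rw [div_pow, div_pow, ← add_div]
    gcongr
    exact knormSq_le_lam k
  rw [cutoffWeight, inv_pow, ← mul_inv]
  gcongr
  nlinarith [sq_nonneg ((k.1.1 : ℝ) / N), sq_nonneg ((k.1.2 : ℝ) / N)]

lemma nonnegL2_cutoffWeight_and_l2Norm_le (hN : 1 ≤ N) :
    NonnegL2 (cutoffWeight N) ∧ l2Norm (cutoffWeight N) ≤ 5 * N := by
  obtain ⟨hsum, htsum⟩ := summable_and_tsum_int_inv_one_add_sq_le hN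
  have hN₀ : 0 < N := zero_lt_one.trans_le hN
  have hnonneg (m : ℤ) : 0 ≤ (1 + ((m : ℝ) / N) ^ 2)⁻¹ := by positivity
  have hprod := hsum.mul_of_nonneg hsum hnonneg hnonneg
  have hinj : Function.Injective fun k : Freq => k.1 := Subtype.val_injective
  have hsq : Summable fun k => cutoffWeight N k ^ 2 :=
    .of_nonneg_of_le (fun _ => sq_nonneg _) (cutoffWeight_sq_le hN₀) (hprod.comp_injective hinj)
  refine ⟨⟨fun k => ?_, hsq⟩, Real.sqrt_le_iff.mpr ⟨by positivity, ?_⟩⟩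
  · have := lam_pos k
    rw [cutoffWeight]
    positivity
  calc ∑' k, cutoffWeight N k ^ 2
      ≤ ∑' q : ℤ × ℤ, (1 + ((q.1 : ℝ) / N) ^ 2)⁻¹ * (1 + ((q.2 : ℝ) / N) ^ 2)⁻¹ :=
        hsq.tsum_le_tsum_of_inj _ hinj (fun _ _ => by positivity) (cutoffWeight_sq_le hN₀) hprod
    _ = (∑' m : ℤ, (1 + ((m : ℝ) / N) ^ 2)⁻¹) * ∑' m : ℤ, (1 + ((m : ℝ) / N) ^ 2)⁻¹ :=
        (hsum.tsum_mul_tsum hsum hprod).symm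
    _ ≤ (5 * N) * (5 * N) := by gcongr
    _ = (5 * N) ^ 2 := by ring

end CutoffWeight

section CriticalEstimate

/-- The modulus of the Fourier coefficients of `c` weighted so that the square of its `ℓ²` norm is
`‖c‖²_{Ḣ⁰} + ‖c‖²_{Ḣ¹} / N²`, whose two terms balance at `N = ‖c‖_{Ḣ¹} / ‖c‖_{Ḣ⁰}`. -/
def balancedModulus (N : ℝ) (c : Coef) (k : Freq) : ℝ := √(1 + lam k / N ^ 2) * ‖c k‖

variable {N : ℝ} {c d e : Coef}

lemma balancedModulus_sq (N : ℝ) (c : Coef) (k : Freq) :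
    balancedModulus N c k ^ 2 =
      lam k ^ (0 : ℝ) * ‖c k‖ ^ 2 + (lam k ^ (1 : ℝ) * ‖c k‖ ^ 2) / N ^ 2 := by
  have := lam_pos k
  rw [balancedModulus, mul_pow, Real.sq_sqrt (by positivity), Real.rpow_zero, Real.rpow_one]
  ring

lemma FinH.nonnegL2_balancedModulus (hc : FinH 1 c) : NonnegL2 (balancedModulus N c) where
  nonneg k := by
    rw [balancedModulus]
    positivity
  summable_sq := ((hc.mono zero_le_one).add (hc.div_const (N ^ 2))).congr fun k =>
    (balancedModulus_sq N c k).symm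

lemma FinH.l2Norm_balancedModulus (hc : FinH 1 c) :
    l2Norm (balancedModulus N c) = √(hN 0 c ^ 2 + hN 1 c ^ 2 / N ^ 2) := by
  simp only [l2Norm, balancedModulus_sq, sq_hN, hSq]
  rw [(hc.mono zero_le_one).tsum_add (hc.div_const (N ^ 2)), tsum_div_const]

lemma norm_mul_norm_le_balancedModulus (N : ℝ) (c e : Coef) (k l : Freq) :
    ‖c k‖ * ‖e l‖ ≤ balancedModulus N c k * balancedModulus N e l *
      (cutoffWeight N k + cutoffWeight N l) := by
  have hk := lam_pos k
  have hl := lam_pos l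
  set x := √(1 + lam k / N ^ 2) with hx
  set y := √(1 + lam l / N ^ 2) with hy
  have hx_pos : 0 < x := by positivity
  have hy_pos : 0 < y := by positivity
  have hxk : cutoffWeight N k = (x ^ 2)⁻¹ := by rw [cutoffWeight, hx, Real.sq_sqrt (by positivity)]
  have hyl : cutoffWeight N l = (y ^ 2)⁻¹ := by rw [cutoffWeight, hy, Real.sq_sqrt (by positivity)]
  have hamgm : 1 ≤ x * y * ((x ^ 2)⁻¹ + (y ^ 2)⁻¹) := by
    rw [show x * y * ((x ^ 2)⁻¹ + (y ^ 2)⁻¹) = (y ^ 2 + x ^ 2) / (x * y) by field_simp,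
      one_le_div (by positivity)]
    nlinarith [sq_nonneg (x - y)]
  calc ‖c k‖ * ‖e l‖ ≤ ‖c k‖ * ‖e l‖ * (x * y * ((x ^ 2)⁻¹ + (y ^ 2)⁻¹)) :=
        le_mul_of_one_le_right (by positivity) hamgm
    _ = x * ‖c k‖ * (y * ‖e l‖) * (cutoffWeight N k + cutoffWeight N l) := by
        rw [hxk, hyl]
        ring

lemma norm_triadTerm_zero_le (h1N : 1 ≤ N) (t : Triad) :
    ‖triadTerm 0 c d e t‖ ≤ balancedModulus N c t.fst * sobolevModulus 1 d t.snd *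
      balancedModulus N e t.sum *
        (cutoffWeight N t.fst + cutoffWeight N t.snd + cutoffWeight N t.sum) := by
  have hd : 0 ≤ sobolevModulus 1 d t.snd := sobolevModulus_nonneg 1 d t.snd
  have hcut : 0 ≤ cutoffWeight N t.snd := (nonnegL2_cutoffWeight_and_l2Norm_le h1N).1.nonneg _
  have hrest : 0 ≤ balancedModulus N c t.fst * balancedModulus N e t.sum := by
    simp only [balancedModulus]
    positivity
  calc ‖triadTerm 0 c d e t‖
      ≤ ‖c t.fst‖ * ‖e t.sum‖ * sobolevModulus 1 d t.snd := by
        refine (norm_triadTerm_le_wavenumber_snd 0 c d e t).trans_eq ?_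
        rw [sobolevModulus, Real.rpow_zero, Real.rpow_one]
        ring
    _ ≤ balancedModulus N c t.fst * balancedModulus N e t.sum *
          (cutoffWeight N t.fst + cutoffWeight N t.snd + cutoffWeight N t.sum) *
            sobolevModulus 1 d t.snd := by
        gcongr ?_ * _
        refine (norm_mul_norm_le_balancedModulus N c e t.fst t.sum).trans ?_
        gcongr
        linarith
    _ = _ := by ring

lemma summable_triadTerm_zero_and_abs_hInner_Bc_le (h1N : 1 ≤ N) (hc : FinH 1 c) (hd : FinH 1 d)
    (he : FinH 1 e) :
    Summable (triadTerm 0 c d e) ∧ |hInner 0 (Bc c d) e| ≤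
      15 * N * hN 1 d * (√(hN 0 c ^ 2 + hN 1 c ^ 2 / N ^ 2) *
        √(hN 0 e ^ 2 + hN 1 e ^ 2 / N ^ 2)) := by
  obtain ⟨hcut, hcut_le⟩ := nonnegL2_cutoffWeight_and_l2Norm_le h1N
  obtain ⟨hsum, hle⟩ := summable_triadTerm_and_abs_hInner_Bc_le zero_le_one
    hc.nonnegL2_balancedModulus hd.nonnegL2 he.nonnegL2_balancedModulus hcut
    fun t => (norm_triadTerm_zero_le h1N t).trans_eq (one_mul _).symm
  refine ⟨hsum, hle.trans ?_⟩
  rw [hc.l2Norm_balancedModulus, he.l2Norm_balancedModulus, l2Norm_sobolevModulus]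
  set A := √(hN 0 c ^ 2 + hN 1 c ^ 2 / N ^ 2)
  set E := √(hN 0 e ^ 2 + hN 1 e ^ 2 / N ^ 2)
  have hd₁ := hN_nonneg 1 d
  calc 1 * (3 * (A * hN 1 d * E * l2Norm (cutoffWeight N)))
      ≤ 1 * (3 * (A * hN 1 d * E * (5 * N))) := by gcongr
    _ = 15 * N * hN 1 d * (A * E) := by ring

theorem abs_hInner_zero_Bc_self_le {v w : Coef} (hv : FinH 1 v) (hw : FinH 1 w) :
    |hInner 0 (Bc w v) w| ≤ 30 * hN 1 v * hN 0 w * hN 1 w := by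
  rcases (hN_nonneg 0 w).eq_or_lt with h | h
  · have hw_zero : w = 0 := (hw.mono zero_le_one).eq_zero_of_hN_eq_zero h.symm
    simp [hw_zero, hInner, hN, hSq]
  · set N := hN 1 w / hN 0 w with hN_def
    have h1N : 1 ≤ N := (one_le_div h).mpr (hw.hN_le zero_le_one)
    have hbalance : hN 1 w ^ 2 / N ^ 2 = hN 0 w ^ 2 := by
      have : 0 < hN 1 w := h.trans_le (hw.hN_le zero_le_one)
      rw [hN_def]
      field_simp
    refine (summable_triadTerm_zero_and_abs_hInner_Bc_le h1N hw hv hw).2.trans_eq ?_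
    rw [hbalance, Real.mul_self_sqrt (by positivity), hN_def]
    field_simp
    ring

end CriticalEstimate

section Antisymmetry

lemma knormSq_fneg (k : Freq) : knormSq (fneg k) = knormSq k := by
  simp [knormSq, fneg]

lemma evec_fneg (k : Freq) : evec (fneg k) = -evec k := by
  rw [evec, knormSq_fneg]
  simp [evec, fneg, neg_div]

lemma fneg_fneg (k : Freq) : fneg (fneg k) = k := Subtype.ext (neg_neg k.1)

/-- The reflection of triads `(m, n, k) ↦ (m, -k, -n)`, which exchanges the last two arguments of
the trilinear form. -/
def Triad.mirror (t : Triad) : Triad where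
  fst := t.fst
  snd := fneg t.sum
  sum := fneg t.snd
  add_eq := by simp [fneg, ← t.add_eq]

lemma Triad.mirror_involutive : Function.Involutive Triad.mirror := fun t => by
  simp [mirror, fneg_fneg]

variable {c d e : Coef}

lemma triadTerm_zero_mirror (hd : IsReal d) (he : IsReal e) (t : Triad) :
    triadTerm 0 c d e t.mirror = -triadTerm 0 c e d t := by
  have hsymbol : dotR (evec t.fst) (fvec (fneg t.sum)) * dotR (evec (fneg t.sum))
      (evec (fneg t.snd)) =
      -(dotR (evec t.fst) (fvec t.snd) * dotR (evec t.snd) (evec t.sum)) := by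
    have hfvec : fvec (fneg t.sum) = -fvec t.sum := by simp [fvec, fneg]
    rw [t.dotR_evec_fst_fvec_snd, hfvec, evec_fneg, evec_fneg]
    simp only [dotR, Prod.fst_neg, Prod.snd_neg]
    ring
  simp only [triadTerm, Triad.mirror, hsymbol, hd t.sum, he t.snd, Real.rpow_zero, map_neg,
    Complex.conj_conj, Complex.ofReal_neg]
  ring

lemma hInner_zero_Bc_eq_neg (hc : FinH 1 c) (hd : MemH 1 d) (he : MemH 1 e) :
    hInner 0 (Bc c d) e = -hInner 0 (Bc c e) d := by
  rw [hInner_Bc_eq (summable_triadTerm_zero_and_abs_hInner_Bc_le le_rfl hc hd.2 he.2).1,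
    hInner_Bc_eq (summable_triadTerm_zero_and_abs_hInner_Bc_le le_rfl hc he.2 hd.2).1,
    ← Triad.mirror_involutive.toPerm.tsum_eq, ← Complex.neg_re, ← tsum_neg]
  exact congrArg Complex.re (tsum_congr (triadTerm_zero_mirror hd.1 he.1))

theorem hInner_zero_Bc_self_eq_zero {v w : Coef} (hv : FinH 1 v) (hw : MemH 1 w) :
    hInner 0 (Bc v w) w = 0 :=
  self_eq_neg.mp (hInner_zero_Bc_eq_neg hv hw hw)

end Antisymmetry

theorem statement12_general (a b : ℝ) (hb : 1 ≤ b) (hab : |a| ≤ b) (hcrit : b = 1 → a = 0) :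
    ∃ C : ℝ, 0 < C ∧ ∀ v w : Coef, FinH b v → MemH (a + 1) w →
      |hInner a (Bc v w) w| + |hInner a (Bc w v) w| ≤ C * hN b v * hN a w * hN (a + 1) w := by
  rcases hb.eq_or_lt with rfl | hb
  · obtain rfl := hcrit rfl
    rw [zero_add]
    refine ⟨30, by norm_num, fun v w hv hw => ?_⟩
    rw [hInner_zero_Bc_self_eq_zero hv hw, abs_zero, zero_add]
    exact abs_hInner_zero_Bc_self_le hv hw.2
  · refine ⟨2 * noncriticalConst b, mul_pos two_pos (noncriticalConst_pos hb), fun v w hv hw => ?_⟩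
    have hwa : FinH a w := hw.2.mono (le_add_of_nonneg_right zero_le_one)
    have hleft := abs_hInner_Bc_le_of_one_lt_left hb hab hv hwa hw.2
    have hright := abs_hInner_Bc_le_of_one_lt_right hb hab hwa hv hw.2
    linarith

lemma one_le_astar (a : ℤ) : 1 ≤ astar a := by
  unfold astar
  split_ifs <;> grind

lemma abs_le_astar (a : ℤ) : |a| ≤ astar a := by
  unfold astar
  split_ifs <;> linarith

lemma eq_zero_of_astar_eq_one {a : ℤ} (h : astar a = 1) : a = 0 := by
  unfold astar at h
  grind

/-- Proposition `PropBilinearFormEstimates`. For `a ∈ ℤ`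
with `a* = |a|+1` if `|a| ≤ 1` and `a* = |a|` if `|a| ≥ 2`, there is a
constant `C = C(a) > 0` such that for all `v ∈ Ḣ^{a*}_⋄` and
`w ∈ Ḣ^{a+1}_⋄`,
`|⟨B[v,w], w⟩_{Ḣ^a}| + |⟨B[w,v], w⟩_{Ḣ^a}|
   ≤ C ‖v‖_{Ḣ^{a*}} ‖w‖_{Ḣ^a} ‖w‖_{Ḣ^{a+1}}`. -/
theorem statement12 (a : ℤ) :
    ∃ C : ℝ, 0 < C ∧
      ∀ v w : Coef, MemH (astar a : ℝ) v → MemH ((a : ℝ) + 1) w →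
        |hInner (a : ℝ) (Bc v w) w| + |hInner (a : ℝ) (Bc w v) w| ≤
          C * hN (astar a : ℝ) v * hN (a : ℝ) w * hN ((a : ℝ) + 1) w := by
  obtain ⟨C, hC, h⟩ := statement12_general a (astar a) (mod_cast one_le_astar a)
    (mod_cast abs_le_astar a) fun h => mod_cast eq_zero_of_astar_eq_one (mod_cast h)
  exact ⟨C, hC, fun v w hv => h v w hv.2⟩

end NS2D
end
end

section
/- Fix a ∈ ℝ, T > 0 and ν > 0. Let ℒ : Ḣ_⋄ → L²([0,T], Ḣ_⋄) denote the heat-flow operator, ℒ[h](t) = S_t[h] where S_t[h] = Σ_{j≥1} e^{−νλ_j t} ⟨h, e_j⟩_{L²} e_j, and let ℒ* be its adjoint. Then ℒ*ℒ maps Ḣ^a_⋄ continuously into Ḣ^{a+2}_⋄, and as linear operators on Ḣ^a_⋄ one has the identity Δ ℒ*ℒ = (1/(2ν)) ( S_{2T} − Id ). -/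
open MeasureTheory Set
open scoped BigOperators

noncomputable section

namespace NS2D

lemma lam_fneg (k : Freq) : lam (fneg k) = lam k := by
  simp [lam, knormSq, fneg]

lemma fneg_eq_iff {j k : Freq} : fneg j = k ↔ j = fneg k :=
  ⟨fun h => by rw [← h, fneg_fneg], fun h => by rw [h, fneg_fneg]⟩

lemma fneg_ne (k : Freq) : fneg k ≠ k := fun h =>
  k.2 (self_eq_neg.mp (congrArg Subtype.val h).symm)

section FourierMultipliers

/-- The Fourier multiplier with real symbol `m`, acting on fields through their coefficients. -/
def fourierMul (m : Freq → ℝ) (c : Coef) : Coef := fun k => (m k : ℂ) * c k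

variable {m : Freq → ℝ} {c : Coef} {α s C : ℝ}

lemma IsReal.fourierMul (hm : ∀ k, m (fneg k) = m k) (hc : IsReal c) :
    IsReal (fourierMul m c) := fun k => by
  simp only [NS2D.fourierMul, hm, hc k, map_mul, Complex.conj_ofReal, mul_neg]

lemma lam_rpow_mul_norm_fourierMul_sq_le {k : Freq} (hm : |m k| * lam k ^ (s / 2) ≤ C) :
    lam k ^ (α + s) * ‖fourierMul m c k‖ ^ 2 ≤ C ^ 2 * (lam k ^ α * ‖c k‖ ^ 2) := by
  have hl := lam_pos k
  have hs : lam k ^ s = (lam k ^ (s / 2)) ^ 2 := by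
    rw [← Real.rpow_mul_natCast hl.le, Nat.cast_ofNat, div_mul_cancel₀ s two_ne_zero]
  calc lam k ^ (α + s) * ‖fourierMul m c k‖ ^ 2
      = (|m k| * lam k ^ (s / 2)) ^ 2 * (lam k ^ α * ‖c k‖ ^ 2) := by
        rw [fourierMul, norm_mul, Complex.norm_real, Real.norm_eq_abs, Real.rpow_add hl, hs]
        ring
    _ ≤ C ^ 2 * (lam k ^ α * ‖c k‖ ^ 2) := by gcongr

lemma FinH.fourierMul (hm : ∀ k, |m k| * lam k ^ (s / 2) ≤ C) (hc : FinH α c) :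
    FinH (α + s) (fourierMul m c) :=
  .of_nonneg_of_le (fun k => mul_nonneg (Real.rpow_nonneg (lam_pos k).le _) (sq_nonneg _))
    (fun k => lam_rpow_mul_norm_fourierMul_sq_le (hm k)) (hc.mul_left (C ^ 2))

lemma hN_fourierMul_le (hC : 0 ≤ C) (hm : ∀ k, |m k| * lam k ^ (s / 2) ≤ C) (hc : FinH α c) :
    hN (α + s) (fourierMul m c) ≤ C * hN α c := by
  have hSq_le : hSq (α + s) (fourierMul m c) ≤ C ^ 2 * hSq α c := by
    rw [hSq, hSq, ← tsum_mul_left]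
    exact (hc.fourierMul hm).tsum_le_tsum
      (fun k => lam_rpow_mul_norm_fourierMul_sq_le (hm k)) (hc.mul_left _)
  calc hN (α + s) (fourierMul m c) ≤ √(C ^ 2 * hSq α c) := Real.sqrt_le_sqrt hSq_le
    _ = C * hN α c := by rw [Real.sqrt_mul (sq_nonneg C), Real.sqrt_sq hC, hN]

end FourierMultipliers

section TestFields

variable {c d g : Coef}

lemma IsReal.memHinf_of_finite_support (hg : IsReal g) (hfin : g.support.Finite) : MemHinf g :=
  fun _ => ⟨hg, summable_of_hasFiniteSupport <| hfin.subset fun k hk hgk => hk (by simp [hgk])⟩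

lemma innerC_eq_sum {s : Finset Freq} (hg : g.support ⊆ s) (c : Coef) :
    innerC c g = ∑ k ∈ s, c k * (starRingEnd ℂ) (g k) :=
  tsum_eq_sum' fun k hk => hg fun hgk => hk (by simp [hgk])

open Classical in
/-- The real-valued field with frequencies `±k` whose coefficient at `k` is `z`. -/
def realMode (k : Freq) (z : ℂ) : Coef :=
  Pi.single k z - Pi.single (fneg k) ((starRingEnd ℂ) z)

lemma isReal_realMode (k : Freq) (z : ℂ) : IsReal (realMode k z) := fun j => by
  classical
  simp only [realMode, Pi.sub_apply, Pi.single_apply, fneg_eq_iff, fneg_fneg]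
  split_ifs <;> simp

lemma support_realMode_subset (k : Freq) (z : ℂ) : (realMode k z).support ⊆ {k, fneg k} := by
  intro j hj
  by_contra h
  simp only [mem_insert_iff, mem_singleton_iff, not_or] at h
  exact hj (by simp [realMode, h.1, h.2])

lemma innerC_realMode (c : Coef) (k : Freq) (z : ℂ) :
    innerC c (realMode k z) = c k * (starRingEnd ℂ) z - c (fneg k) * z := by
  classical
  rw [innerC_eq_sum (s := {k, fneg k}) (by simpa using support_realMode_subset k z),
    Finset.sum_pair (fneg_ne k).symm]
  simp [realMode, fneg_ne k, (fneg_ne k).symm, sub_eq_add_neg]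

lemma eq_of_forall_innerC_eq
    (h : ∀ g, IsReal g → g.support.Finite → innerC c g = innerC d g) : c = d := by
  funext k
  have pairing (z : ℂ) : c k * (starRingEnd ℂ) z - c (fneg k) * z
      = d k * (starRingEnd ℂ) z - d (fneg k) * z := by
    simpa only [innerC_realMode] using h _ (isReal_realMode k z)
      ((toFinite {k, fneg k}).subset (support_realMode_subset k z))
  have at_one : c k - c (fneg k) = d k - d (fneg k) := by simpa using pairing 1
  have at_I : c k + c (fneg k) = d k + d (fneg k) := by
    have := pairing Complex.I
    rw [Complex.conj_I] at this
    exact mul_left_cancel₀ (neg_ne_zero.mpr Complex.I_ne_zero) (by linear_combination this)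
  linear_combination (at_one + at_I) / 2

lemma integral_innerC_fourierMul {m : ℝ → Freq → ℝ} {a b : ℝ}
    (hm : ∀ k, IntervalIntegrable (fun t => m t k) volume a b) (c : Coef)
    (hg : g.support.Finite) :
    ∫ t in a..b, innerC (fourierMul (m t) c) g
      = innerC (fourierMul (fun k => ∫ t in a..b, m t k) c) g := by
  simp only [innerC_eq_sum hg.coe_toFinset.ge, fourierMul, mul_assoc]
  rw [intervalIntegral.integral_finsetSum fun k _ => ?_]
  · simp only [intervalIntegral.integral_mul_const, intervalIntegral.integral_ofReal]
  · exact IntervalIntegrable.mul_const ⟨(hm k).1.ofReal, (hm k).2.ofReal⟩ _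

end TestFields

section HeatFlow

variable {ν T : ℝ}

lemma innerC_heatS_heatS (ν t : ℝ) (c d : Coef) :
    innerC (heatS ν t c) (heatS ν t d) = innerC (heatS ν (2 * t) c) d := by
  refine tsum_congr fun k => ?_
  have exp_double : Real.exp (-(ν * lam k * (2 * t))) = Real.exp (-(ν * lam k * t)) ^ 2 := by
    rw [← Real.exp_nat_mul]
    ring_nf
  simp only [heatS, exp_double, map_mul, Complex.conj_ofReal, Complex.ofReal_pow]
  ring

/-- The symbol `∫₀ᵀ e^{-2νλ_k t} dt` of `ℒ*ℒ`. -/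
def heatGramSymbol (ν T : ℝ) (k : Freq) : ℝ :=
  ∫ t in (0:ℝ)..T, Real.exp (-(ν * lam k * (2 * t)))

/-- The operator `ℒ*ℒ = ∫₀ᵀ S_{2t} dt` as a Fourier multiplier. -/
def heatGram (ν T : ℝ) : Coef → Coef := fourierMul (heatGramSymbol ν T)

lemma mul_heatGramSymbol (ν T : ℝ) (k : Freq) :
    2 * ν * lam k * heatGramSymbol ν T k = 1 - Real.exp (-(ν * lam k * (2 * T))) := by
  have deriv_neg_exp (t : ℝ) : HasDerivAt (fun t => -Real.exp (-(ν * lam k * (2 * t))))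
      (2 * ν * lam k * Real.exp (-(ν * lam k * (2 * t)))) t := by
    refine (((hasDerivAt_id t).const_mul 2).const_mul (ν * lam k)).neg.exp.neg.congr_deriv ?_
    simp only [Pi.neg_apply, id]
    ring
  rw [heatGramSymbol, ← intervalIntegral.integral_const_mul,
    intervalIntegral.integral_eq_sub_of_hasDerivAt (fun t _ => deriv_neg_exp t)
      (Continuous.intervalIntegrable (by fun_prop) _ _)]
  simp [sub_eq_neg_add, add_comm]

lemma abs_heatGramSymbol_mul_lam_le (hT : 0 ≤ T) (hν : 0 < ν) (k : Freq) :
    |heatGramSymbol ν T k| * lam k ≤ 1 / (2 * ν) := by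
  have symbol_nonneg : 0 ≤ heatGramSymbol ν T k :=
    intervalIntegral.integral_nonneg hT fun t _ => (Real.exp_pos _).le
  rw [abs_of_nonneg symbol_nonneg, le_div_iff₀ (by positivity)]
  linarith [mul_heatGramSymbol ν T k, Real.exp_pos (-(ν * lam k * (2 * T)))]

lemma heatGramSymbol_fneg (ν T : ℝ) (k : Freq) :
    heatGramSymbol ν T (fneg k) = heatGramSymbol ν T k := by
  simp only [heatGramSymbol, lam_fneg]

lemma integral_innerC_heatS {g : Coef} (ν T : ℝ) (h : Coef) (hg : g.support.Finite) :
    ∫ t in (0:ℝ)..T, innerC (heatS ν t h) (heatS ν t g) = innerC (heatGram ν T h) g := by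
  simp only [innerC_heatS_heatS]
  exact integral_innerC_fourierMul (m := fun t k => Real.exp (-(ν * lam k * (2 * t))))
    (fun k => Continuous.intervalIntegrable (by fun_prop) _ _) h hg

lemma lapC_heatGram (hν : ν ≠ 0) (T : ℝ) (h : Coef) :
    lapC (heatGram ν T h) = (1 / (2 * ν)) • (heatS ν (2 * T) h - h) := by
  funext k
  have symbol_eq : -(lam k * heatGramSymbol ν T k)
      = 1 / (2 * ν) * (Real.exp (-(ν * lam k * (2 * T))) - 1) := by
    rw [← neg_sub, ← mul_heatGramSymbol]
    field_simp
  calc lapC (heatGram ν T h) k = ((-(lam k * heatGramSymbol ν T k) : ℝ) : ℂ) * h k := by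
        simp only [lapC, heatGram, fourierMul]
        push_cast
        ring
    _ = ((1 / (2 * ν)) • (heatS ν (2 * T) h - h)) k := by
        rw [symbol_eq]
        simp only [Pi.smul_apply, Pi.sub_apply, heatS, Complex.real_smul]
        push_cast
        ring

end HeatFlow

/-- Proposition `PropLstarL`. Let `ℒ[h](t) = S_t[h]` be the
heat flow and `ℒ*` its adjoint with respect to the `L²([0,T], Ḣ_⋄)` inner
product. Any operator `M = ℒ*ℒ`, characterised by
`⟨M h, g⟩_{L²} = ∫₀ᵀ ⟨S_t h, S_t g⟩_{L²} dt` for test fields `g`, maps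
`Ḣ^α_⋄` continuously into `Ḣ^{α+2}_⋄`, and on `Ḣ^α_⋄` satisfies the operator
identity `Δ ℒ*ℒ = (1/(2ν)) (S_{2T} − Id)`. -/
theorem statement15 (α : ℝ) (T ν : ℝ) (hT : 0 < T) (hν : 0 < ν)
    (M : Coef → Coef)
    (hM : ∀ h, MemH α h → ∀ g, MemHinf g →
      innerC (M h) g = ∫ t in (0:ℝ)..T, innerC (heatS ν t h) (heatS ν t g)) :
    (∃ C : ℝ, 0 < C ∧ ∀ h, MemH α h →
      MemH (α + 2) (M h) ∧ hN (α + 2) (M h) ≤ C * hN α h) ∧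
    (∀ h, MemH α h →
      lapC (M h) = (1 / (2 * ν)) • (heatS ν (2 * T) h - h)) := by
  have M_eq (h : Coef) (hh : MemH α h) : M h = heatGram ν T h :=
    eq_of_forall_innerC_eq fun g hg hfin => by
      rw [hM h hh g (hg.memHinf_of_finite_support hfin), integral_innerC_heatS ν T h hfin]
  have symbol_le (k : Freq) : |heatGramSymbol ν T k| * lam k ^ ((2:ℝ) / 2) ≤ 1 / (2 * ν) := by
    simpa using abs_heatGramSymbol_mul_lam_le hT.le hν k
  refine ⟨⟨1 / (2 * ν), by positivity, fun h hh => ?_⟩, fun h hh => ?_⟩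
  · rw [M_eq h hh]
    exact ⟨⟨hh.1.fourierMul (heatGramSymbol_fneg ν T), hh.2.fourierMul symbol_le⟩,
      hN_fourierMul_le (by positivity) symbol_le hh.2⟩
  · rw [M_eq h hh, lapC_heatGram hν.ne']

end NS2D
end
end
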